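/- Let p be a prime and m, n ∈ ℕ. Then K_1(C_{p^m} ⊕ C_p^n) ≤ K_1(C_{p^m}) + K_1(C_p^{n+1}) − 1. -/

import Mathlib

open Finset

/-- `S(I)` is minimal zero-sum: nonempty, zero-sum, and no proper nonempty
subfamily is zero-sum. -/
def IsMinZeroSum {G : Type*} [AddCommGroup G] {ℓ : ℕ} (g : Fin ℓ → G)
    (I : Finset (Fin ℓ)) : Prop :=
  I.Nonempty ∧ ∑ i ∈ I, g i = 0 ∧ ∀ J ⊂ I, J.Nonempty → ∑ i ∈ J, g i ≠ 0

/-- `P` is an irreducible factorization of the indexed multiset `g`: a partition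
of the index set all of whose parts are minimal zero-sum. -/
def IsFactorization {G : Type*} [AddCommGroup G] {ℓ : ℕ} (g : Fin ℓ → G)
    (P : Finpartition (Finset.univ : Finset (Fin ℓ))) : Prop :=
  ∀ I ∈ P.parts, IsMinZeroSum g I

/-- `g` is a unique factorization indexed multiset (UFIM) over `G∖{0}`:
all elements are nonzero and there is exactly one irreducible factorization. -/
def IsUFIM {G : Type*} [AddCommGroup G] {ℓ : ℕ} (g : Fin ℓ → G) : Prop :=
  (∀ i, g i ≠ 0) ∧
  ∃! P : Finpartition (Finset.univ : Finset (Fin ℓ)), IsFactorization g P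

/-- The cross number `k(S) = ∑ 1/ord(g_i)`. -/
noncomputable def crossNum {G : Type*} [AddCommGroup G] {ℓ : ℕ} (g : Fin ℓ → G) : ℝ :=
  ∑ i, (1 : ℝ) / (addOrderOf (g i) : ℝ)

/-- `K₁(G)`: the maximal cross number of a UFIM over `G∖{0}`. -/
noncomputable def K1 (G : Type*) [AddCommGroup G] : ℝ :=
  sSup {x : ℝ | ∃ (ℓ : ℕ) (g : Fin ℓ → G), IsUFIM g ∧ crossNum g = x}

/-- `N₁(G)`: the maximal length of a UFIM over `G∖{0}`. -/
noncomputable def N1 (G : Type*) [AddCommGroup G] : ℕ :=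
  sSup {n : ℕ | ∃ g : Fin n → G, IsUFIM g}

/-- `K(G)`: the maximal cross number of a minimal zero-sum indexed multiset over `G∖{0}`. -/
noncomputable def Kcross (G : Type*) [AddCommGroup G] : ℝ :=
  sSup {x : ℝ | ∃ (ℓ : ℕ) (g : Fin ℓ → G), (∀ i, g i ≠ 0) ∧
    IsMinZeroSum g Finset.univ ∧ crossNum g = x}

/-- `g` is zero-sum free: no nonempty subfamily is zero-sum. -/
def IsZeroSumFree {G : Type*} [AddCommGroup G] {ℓ : ℕ} (g : Fin ℓ → G) : Prop :=
  ∀ I : Finset (Fin ℓ), I.Nonempty → ∑ i ∈ I, g i ≠ 0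

/-- The little cross number `k(G)`: the maximal cross number of a zero-sum free
indexed multiset over `G∖{0}`. -/
noncomputable def littleCross (G : Type*) [AddCommGroup G] : ℝ :=
  sSup {x : ℝ | ∃ (ℓ : ℕ) (g : Fin ℓ → G), (∀ i, g i ≠ 0) ∧
    IsZeroSumFree g ∧ crossNum g = x}

/-! A zero-sum family of nonzero elements factors uniquely exactly when its zero-sum subfamilies are
closed under intersection. In this form unique factorization passes to zero-sum subfamilies, to
coarsenings and to unions of independent families.

Let `0 → H → G → C → 0` be exact, every element of `G` outside `H` having order at least
`|C| * exp H`. Then `K1 G ≤ K1 H + 1 / exp H`: in a UFIM over `G`, consider the elements outside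
`H`. If each of their subfamilies with zero sum in `C` is zero-sum, then their images form a UFIM
over `C`, so there are at most `|C|` of them and their cross number is at most `1 / exp H`, while
the other elements form a UFIM over `H`. If not, replace a minimal subfamily violating this by its
sum: it has at most `|C|` elements, hence cross number at most `1 / exp H`, and its sum is a nonzero
element of `H`, so the family becomes shorter without losing cross number.

Conversely, if `C` is cyclic of order `n`, then `n` elements lying over a generator of `C` and
summing to zero can be adjoined to a UFIM over `H`, whence `K1 H + n / exp G ≤ K1 G`.

Passing from `C_{p^k}` to `C_{p^(k+1)}` raises `K1` by at least `1 / p^k`, and passing from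
`C_{p^k} ⊕ F` to `C_{p^(k+1)} ⊕ F` raises it by at most `1 / p^k` if `exp F ∣ p^k`. -/

section UniqueFactorization

variable {G H : Type*} [AddCommGroup G] [AddCommGroup H] {ι κ : Type*}

/-- A unique factorization indexed multiset `{g i | i ∈ s}` over an arbitrary index type, encoded
without reference to factorizations: the elements are nonzero, the total is zero, and zero-sum
subfamilies are closed under intersection. On `univ : Finset (Fin ℓ)` it agrees with `IsUFIM`, see
`IsUFIM.isUFIMOn_univ` and `IsUFIMOn.isUFIM`. -/
structure IsUFIMOn [DecidableEq ι] (g : ι → G) (s : Finset ι) : Prop where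
  ne_zero : ∀ i ∈ s, g i ≠ 0
  sum_eq_zero : ∑ i ∈ s, g i = 0
  sum_inter_eq_zero : ∀ A ⊆ s, ∀ B ⊆ s,
    ∑ i ∈ A, g i = 0 → ∑ i ∈ B, g i = 0 → ∑ i ∈ A ∩ B, g i = 0

/-- The cross number of `{g i | i ∈ s}`; for `s = univ : Finset (Fin ℓ)` it is `crossNum g`. -/
noncomputable def crossNumOn (g : ι → G) (s : Finset ι) : ℝ :=
  ∑ i ∈ s, (1 : ℝ) / addOrderOf (g i)

/-- The set of sums of the subfamilies of `{g i | i ∈ s}`, the empty sum included. It serves to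
express that two families are independent and to bound the length of a UFIM. -/
def subsetSums (g : ι → G) (s : Finset ι) : Set G :=
  {x | ∃ A ⊆ s, ∑ i ∈ A, g i = x}

theorem sum_sdiff_eq_zero [DecidableEq ι] {g : ι → G} {A s : Finset ι} (hA : A ⊆ s)
    (hs : ∑ i ∈ s, g i = 0) (hA0 : ∑ i ∈ A, g i = 0) : ∑ i ∈ s \ A, g i = 0 := by
  rw [sum_sdiff_eq_sub hA, hs, hA0, sub_zero]

theorem eq_or_eq_sdiff_of_mem_extendOfLE_top [DecidableEq ι] {A s I : Finset ι}
    (hAs : A ⊆ s) (hI : I ∈ ((⊤ : Finpartition A).extendOfLE hAs).parts) : I = A ∨ I = s \ A :=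
  (Finpartition.mem_parts_or_eq_sdiff_of_mem_extendOfLE _ hAs hI).imp_left fun hI ↦
    mem_singleton.1 (Finpartition.parts_top_subset A hI)

/-! ### Factorizations of families indexed by `Fin ℓ` -/

section Factorization

variable {ℓ : ℕ} {g : Fin ℓ → G}

theorem exists_finpartition_isMinZeroSum {s : Finset (Fin ℓ)} (hs : ∑ i ∈ s, g i = 0) :
    ∃ P : Finpartition s, ∀ I ∈ P.parts, IsMinZeroSum g I := by
  induction s using Finset.strongInduction with
  | H s ih =>
    rcases s.eq_empty_or_nonempty with rfl | hne
    · exact ⟨Finpartition.empty _, by simp⟩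
    by_cases hmin : IsMinZeroSum g s
    · exact ⟨Finpartition.indiscrete hne.ne_empty, by simpa using hmin⟩
    obtain ⟨J, hJ, hJne, hJ0⟩ : ∃ J ⊂ s, J.Nonempty ∧ ∑ i ∈ J, g i = 0 := by
      simpa [IsMinZeroSum, hne, hs] using hmin
    let R : Finpartition s := (⊤ : Finpartition J).extendOfLE hJ.subset
    have hR : ∀ I ∈ R.parts, I ⊂ s ∧ ∑ i ∈ I, g i = 0 := fun I hI ↦ by
      rcases eq_or_eq_sdiff_of_mem_extendOfLE_top hJ.subset hI with rfl | rfl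
      · exact ⟨hJ, hJ0⟩
      · exact ⟨sdiff_ssubset hJ.subset hJne, sum_sdiff_eq_zero hJ.subset hs hJ0⟩
    choose Q hQ using fun I hI ↦ ih I (hR I hI).1 (hR I hI).2
    refine ⟨R.bind Q, fun I hI ↦ ?_⟩
    obtain ⟨K, hK, hIK⟩ := Finpartition.mem_bind.1 hI
    exact hQ K hK I hIK

theorem exists_isFactorization_le (P : Finpartition (univ : Finset (Fin ℓ)))
    (hP : ∀ I ∈ P.parts, ∑ i ∈ I, g i = 0) : ∃ Q ≤ P, IsFactorization g Q := by
  choose Q hQ using fun I hI ↦ exists_finpartition_isMinZeroSum (hP I hI)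
  refine ⟨P.bind Q, fun I hI ↦ ?_, fun I hI ↦ ?_⟩ <;>
    obtain ⟨K, hK, hIK⟩ := Finpartition.mem_bind.1 hI
  · exact ⟨K, hK, (Q K hK).le hIK⟩
  · exact hQ K hK I hIK

theorem IsFactorization.sum_eq_zero {P : Finpartition (univ : Finset (Fin ℓ))}
    (hP : IsFactorization g P) : ∑ i, g i = 0 := by
  rw [← P.biUnion_parts, sum_biUnion P.disjoint]
  exact Finset.sum_eq_zero fun I hI ↦ (hP I hI).2.1

theorem subset_or_disjoint_of_unique_isFactorization {P : Finpartition (univ : Finset (Fin ℓ))}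
    (hP : IsFactorization g P) (huniq : ∀ Q, IsFactorization g Q → Q = P)
    {A I : Finset (Fin ℓ)} (hA : ∑ i ∈ A, g i = 0) (hI : I ∈ P.parts) :
    I ⊆ A ∨ Disjoint I A := by
  -- The factorization refining `{A, Aᶜ}` must be `P` itself.
  let R : Finpartition (univ : Finset (Fin ℓ)) := (⊤ : Finpartition A).extendOfLE (subset_univ A)
  have hR : ∀ J ∈ R.parts, ∑ i ∈ J, g i = 0 := fun J hJ ↦ by
    rcases eq_or_eq_sdiff_of_mem_extendOfLE_top (subset_univ A) hJ with rfl | rfl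
    · exact hA
    · exact sum_sdiff_eq_zero (subset_univ A) hP.sum_eq_zero hA
  obtain ⟨Q, hQR, hQ⟩ := exists_isFactorization_le R hR
  obtain rfl := huniq Q hQ
  obtain ⟨J, hJ, hIJ⟩ := hQR hI
  rcases eq_or_eq_sdiff_of_mem_extendOfLE_top (subset_univ A) hJ with rfl | rfl
  · exact .inl hIJ
  · exact .inr (disjoint_sdiff_self_left.mono_left hIJ)

theorem IsUFIM.isUFIMOn_univ (hg : IsUFIM g) : IsUFIMOn g univ := by
  obtain ⟨hne, P, hP, huniq⟩ := hg
  refine ⟨fun i _ ↦ hne i, hP.sum_eq_zero, fun A _ B _ hA hB ↦ ?_⟩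
  have hAB : A ∩ B = P.parts.biUnion fun I ↦ I ∩ (A ∩ B) := by
    rw [← biUnion_inter, ← Function.id_def, P.biUnion_parts, univ_inter]
  have hdisj : (P.parts : Set (Finset (Fin ℓ))).PairwiseDisjoint fun I ↦ I ∩ (A ∩ B) :=
    P.disjoint.mono fun I ↦ inter_subset_left
  rw [hAB, sum_biUnion hdisj]
  refine Finset.sum_eq_zero fun I hI ↦ ?_
  rcases subset_or_disjoint_of_unique_isFactorization hP huniq hA hI with hIA | hIA
  · rcases subset_or_disjoint_of_unique_isFactorization hP huniq hB hI with hIB | hIB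
    · rw [inter_eq_left.2 (subset_inter hIA hIB), (hP I hI).2.1]
    · rw [disjoint_iff_inter_eq_empty.1 (hIB.mono_right inter_subset_right), sum_empty]
  · rw [disjoint_iff_inter_eq_empty.1 (hIA.mono_right inter_subset_left), sum_empty]

theorem IsMinZeroSum.eq_of_sum_inter_eq_zero {I J : Finset (Fin ℓ)} (hI : IsMinZeroSum g I)
    (hne : (I ∩ J).Nonempty) (h0 : ∑ i ∈ I ∩ J, g i = 0) : I ∩ J = I :=
  inter_subset_left.eq_or_ssubset.resolve_right fun hlt ↦ hI.2.2 _ hlt hne h0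

theorem IsUFIMOn.isUFIM (hg : IsUFIMOn g univ) : IsUFIM g := by
  have parts_subset : ∀ P Q : Finpartition (univ : Finset (Fin ℓ)),
      IsFactorization g P → IsFactorization g Q → P.parts ⊆ Q.parts := by
    intro P Q hP hQ I hI
    obtain ⟨i, hi⟩ := (hP I hI).1
    obtain ⟨J, hJ, hiJ⟩ := Q.exists_mem (mem_univ i)
    have hne : (I ∩ J).Nonempty := ⟨i, mem_inter.2 ⟨hi, hiJ⟩⟩
    have h0 : ∑ k ∈ I ∩ J, g k = 0 := hg.sum_inter_eq_zero I (subset_univ I) J (subset_univ J)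
      (hP I hI).2.1 (hQ J hJ).2.1
    have hIJ : I ∩ J = I := (hP I hI).eq_of_sum_inter_eq_zero hne h0
    rw [inter_comm] at hne h0
    have hJI : J ∩ I = J := (hQ J hJ).eq_of_sum_inter_eq_zero hne h0
    rwa [← hIJ, inter_comm, hJI]
  obtain ⟨P, hP⟩ := exists_finpartition_isMinZeroSum hg.sum_eq_zero
  exact ⟨fun i ↦ hg.ne_zero i (mem_univ i), P, hP, fun Q hQ ↦
    Finpartition.ext ((parts_subset Q P hQ hP).antisymm (parts_subset P Q hP hQ))⟩

end Factorization

/-! ### Operations on UFIMs -/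

theorem IsUFIMOn.of_forall_eq_empty_or_eq [DecidableEq ι] {g : ι → G} {s : Finset ι}
    (hne : ∀ i ∈ s, g i ≠ 0) (hs : ∑ i ∈ s, g i = 0)
    (hmin : ∀ A ⊆ s, ∑ i ∈ A, g i = 0 → A = ∅ ∨ A = s) : IsUFIMOn g s where
  ne_zero := hne
  sum_eq_zero := hs
  sum_inter_eq_zero A hA B hB hA0 hB0 := by
    rcases hmin A hA hA0 with rfl | rfl
    · rw [empty_inter, sum_empty]
    · rwa [inter_eq_right.2 hB]

theorem IsUFIMOn.of_subset [DecidableEq ι] {g : ι → G} {A s : Finset ι} (h : IsUFIMOn g s)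
    (hA : A ⊆ s) (hA0 : ∑ i ∈ A, g i = 0) : IsUFIMOn g A where
  ne_zero i hi := h.ne_zero i (hA hi)
  sum_eq_zero := hA0
  sum_inter_eq_zero B hB C hC := h.sum_inter_eq_zero B (hB.trans hA) C (hC.trans hA)

theorem IsUFIMOn.sdiff [DecidableEq ι] {g : ι → G} {A s : Finset ι} (h : IsUFIMOn g s)
    (hA : A ⊆ s) (hA0 : ∑ i ∈ A, g i = 0) : IsUFIMOn g (s \ A) :=
  h.of_subset sdiff_subset (sum_sdiff_eq_zero hA h.sum_eq_zero hA0)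

theorem IsUFIMOn.coarsen [DecidableEq ι] [DecidableEq κ] {g : ι → G} {t : Finset κ}
    {T : κ → Finset ι} (h : IsUFIMOn g (t.biUnion T)) (hT : (t : Set κ).PairwiseDisjoint T)
    (hne : ∀ k ∈ t, ∑ i ∈ T k, g i ≠ 0) : IsUFIMOn (fun k ↦ ∑ i ∈ T k, g i) t := by
  have hsum : ∀ A ⊆ t, ∑ k ∈ A, ∑ i ∈ T k, g i = ∑ i ∈ A.biUnion T, g i := fun A hA ↦
    (sum_biUnion (hT.subset (coe_subset.2 hA))).symm
  have hinter : ∀ A ⊆ t, ∀ B ⊆ t, (A ∩ B).biUnion T = A.biUnion T ∩ B.biUnion T := by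
    intro A hA B hB
    ext i
    simp only [mem_biUnion, mem_inter]
    refine ⟨fun ⟨k, hk, hi⟩ ↦ ⟨⟨k, hk.1, hi⟩, k, hk.2, hi⟩, ?_⟩
    rintro ⟨⟨k, hkA, hik⟩, l, hlB, hil⟩
    obtain rfl : k = l := hT.elim_finset (hA hkA) (hB hlB) i hik hil
    exact ⟨k, ⟨hkA, hlB⟩, hik⟩
  refine ⟨hne, (hsum t Subset.rfl).trans h.sum_eq_zero, fun A hA B hB hA0 hB0 ↦ ?_⟩
  rw [hsum _ (inter_subset_left.trans hA), hinter A hA B hB]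
  exact h.sum_inter_eq_zero _ (biUnion_subset_biUnion_of_subset_left T hA) _
    (biUnion_subset_biUnion_of_subset_left T hB) ((hsum A hA).symm.trans hA0)
    ((hsum B hB).symm.trans hB0)

theorem IsUFIMOn.disjSum [DecidableEq ι] [DecidableEq κ] {g : ι → G} {h : κ → G} {s : Finset ι}
    {t : Finset κ} (hg : IsUFIMOn g s) (hh : IsUFIMOn h t)
    (hindep : ∀ x ∈ subsetSums g s, ∀ y ∈ subsetSums h t, x + y = 0 → x = 0) :
    IsUFIMOn (Sum.elim g h) (s.disjSum t) := by
  have hsplit : ∀ A ⊆ s.disjSum t, ∑ i ∈ A, Sum.elim g h i = 0 →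
      ∑ i ∈ A.toLeft, g i = 0 ∧ ∑ k ∈ A.toRight, h k = 0 := by
    intro A hA hA0
    obtain ⟨hAs, hAt⟩ := subset_disjSum.1 hA
    rw [sum_sum_eq_sum_toLeft_add_sum_toRight] at hA0
    have hleft : ∑ i ∈ A.toLeft, g i = 0 := hindep _ ⟨_, hAs, rfl⟩ _ ⟨_, hAt, rfl⟩ hA0
    exact ⟨hleft, by simpa only [Sum.elim_inl, hleft, Sum.elim_inr, zero_add] using hA0⟩
  refine ⟨?_, ?_, fun A hA B hB hA0 hB0 ↦ ?_⟩
  · rintro (i | k) hik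
    · exact hg.ne_zero i (inl_mem_disjSum.1 hik)
    · exact hh.ne_zero k (inr_mem_disjSum.1 hik)
  · simp only [sum_disjSum, Sum.elim_inl, Sum.elim_inr, hg.sum_eq_zero, hh.sum_eq_zero, add_zero]
  · obtain ⟨hAs, hAt⟩ := subset_disjSum.1 hA
    obtain ⟨hBs, hBt⟩ := subset_disjSum.1 hB
    rw [sum_sum_eq_sum_toLeft_add_sum_toRight, toLeft_inter, toRight_inter]
    simp only [Sum.elim_inl, Sum.elim_inr]
    rw [hg.sum_inter_eq_zero _ hAs _ hBs (hsplit A hA hA0).1 (hsplit B hB hB0).1,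
      hh.sum_inter_eq_zero _ hAt _ hBt (hsplit A hA hA0).2 (hsplit B hB hB0).2, add_zero]

theorem isUFIMOn_iff_of_injective [DecidableEq ι] {ψ : H →+ G} (hψ : Function.Injective ψ)
    {f : ι → H} {g : ι → G} {s : Finset ι} (hfg : ∀ i ∈ s, ψ (f i) = g i) :
    IsUFIMOn f s ↔ IsUFIMOn g s := by
  have hsum : ∀ A ⊆ s, ∑ i ∈ A, f i = 0 ↔ ∑ i ∈ A, g i = 0 := fun A hA ↦ by
    rw [← map_eq_zero_iff ψ hψ, map_sum, sum_congr rfl fun i hi ↦ hfg i (hA hi)]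
  have hne : ∀ i ∈ s, f i ≠ 0 ↔ g i ≠ 0 := fun i hi ↦ by
    rw [← hfg i hi, map_ne_zero_iff ψ hψ]
  constructor <;> refine fun h ↦ ⟨fun i hi ↦ ?_, ?_, fun A hA B hB ↦ ?_⟩
  · exact (hne i hi).1 (h.ne_zero i hi)
  · exact (hsum s Subset.rfl).1 h.sum_eq_zero
  · rw [← hsum A hA, ← hsum B hB, ← hsum _ (inter_subset_left.trans hA)]
    exact h.sum_inter_eq_zero A hA B hB
  · exact (hne i hi).2 (h.ne_zero i hi)
  · exact (hsum s Subset.rfl).2 h.sum_eq_zero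
  · rw [hsum A hA, hsum B hB, hsum _ (inter_subset_left.trans hA)]
    exact h.sum_inter_eq_zero A hA B hB

theorem crossNumOn_eq_of_injective {ψ : H →+ G} (hψ : Function.Injective ψ)
    {f : ι → H} {g : ι → G} {s : Finset ι} (hfg : ∀ i ∈ s, ψ (f i) = g i) :
    crossNumOn f s = crossNumOn g s :=
  sum_congr rfl fun i hi ↦ by rw [← hfg i hi, addOrderOf_injective ψ hψ]

theorem IsUFIMOn.comp_embedding [DecidableEq ι] [DecidableEq κ] {g : ι → G} {e : κ ↪ ι}
    {t : Finset κ} (h : IsUFIMOn g (t.map e)) : IsUFIMOn (g ∘ e) t where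
  ne_zero k hk := h.ne_zero (e k) (mem_map_of_mem e hk)
  sum_eq_zero := (sum_map t e g).symm.trans h.sum_eq_zero
  sum_inter_eq_zero A hA B hB hA0 hB0 := by
    refine (sum_map (A ∩ B) e g).symm.trans ?_
    rw [map_inter]
    exact h.sum_inter_eq_zero _ (map_subset_map.2 hA) _ (map_subset_map.2 hB)
      ((sum_map A e g).trans hA0) ((sum_map B e g).trans hB0)

theorem IsUFIMOn.exists_isUFIM_crossNum_eq [DecidableEq ι] {g : ι → G} {s : Finset ι}
    (h : IsUFIMOn g s) : ∃ g' : Fin #s → G, IsUFIM g' ∧ crossNum g' = crossNumOn g s := by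
  let e : Fin #s ↪ ι := s.equivFin.symm.toEmbedding.trans (.subtype _)
  have hs : univ.map e = s := by
    rw [← map_map, univ_map_equiv_to_embedding, univ_eq_attach, attach_map_val]
  refine ⟨g ∘ e, (hs.symm ▸ h : IsUFIMOn g (univ.map e)).comp_embedding.isUFIM, ?_⟩
  exact (sum_map univ e fun i ↦ (1 : ℝ) / addOrderOf (g i)).symm.trans (by rw [hs]; rfl)

/-! ### The length of a UFIM -/

theorem exists_card_eq_sub_mem_subsetSums {g : ι → G} {s : Finset ι} (h0 : ∑ i ∈ s, g i = 0)
    (hmin : ∀ A ⊆ s, ∑ i ∈ A, g i = 0 → A = ∅ ∨ A = s) :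
    ∃ X : Finset G, #X = #s ∧ ∀ x ∈ X, ∀ y ∈ X, x - y ∈ subsetSums g s := by
  classical
  obtain ⟨_, -⟩ := exists_wellFoundedLT ι
  -- The initial sums `σ i` are distinct, and their differences are sums over half-open intervals or
  -- over complements of such.
  let σ (i : ι) : G := ∑ j ∈ s with j < i, g j
  have hσ {i k : ι} (hik : i < k) : σ k - σ i = ∑ j ∈ s with i ≤ j ∧ j < k, g j := by
    have hsub : {j ∈ s | j < i} ⊆ {j ∈ s | j < k} :=
      monotone_filter_right s fun j _ hj ↦ hj.trans hik
    rw [← sum_sdiff_eq_sub hsub]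
    congr 1
    ext j
    simp only [mem_sdiff, mem_filter, not_and, not_lt]
    tauto
  have hne {i k : ι} (hi : i ∈ s) (hk : k ∈ s) (hik : i < k) : σ k - σ i ≠ 0 := by
    intro h
    rw [hσ hik] at h
    rcases hmin _ (filter_subset _ s) h with h | h
    · exact filter_eq_empty_iff.1 h hi ⟨le_rfl, hik⟩
    · exact lt_irrefl k (filter_eq_self.1 h k hk).2
  have hinj : Set.InjOn σ s := fun i hi k hk hik ↦ by
    rcases lt_trichotomy i k with hlt | rfl | hlt
    · exact absurd (sub_eq_zero.2 hik.symm) (hne hi hk hlt)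
    · rfl
    · exact absurd (sub_eq_zero.2 hik) (hne hk hi hlt)
  refine ⟨s.image σ, card_image_of_injOn hinj, ?_⟩
  simp only [forall_mem_image]
  intro i _ k _
  rcases lt_trichotomy i k with hlt | rfl | hlt
  · refine ⟨s \ {j ∈ s | i ≤ j ∧ j < k}, sdiff_subset, ?_⟩
    rw [sum_sdiff_eq_sub (filter_subset _ s), h0, ← hσ hlt, zero_sub, neg_sub]
  · exact ⟨∅, empty_subset s, by rw [sum_empty, sub_self]⟩
  · exact ⟨_, filter_subset _ s, (hσ hlt).symm⟩

theorem add_mem_subsetSums_of_sdiff [DecidableEq ι] {g : ι → G} {A s : Finset ι} (hA : A ⊆ s)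
    {x y : G} (hx : x ∈ subsetSums g A) (hy : y ∈ subsetSums g (s \ A)) :
    x + y ∈ subsetSums g s := by
  obtain ⟨B, hB, rfl⟩ := hx
  obtain ⟨C, hC, rfl⟩ := hy
  exact ⟨B ∪ C, union_subset (hB.trans hA) (hC.trans sdiff_subset),
    sum_union (disjoint_sdiff.mono hB hC)⟩

theorem IsUFIMOn.eq_zero_of_add_eq_zero [DecidableEq ι] {g : ι → G} {A s : Finset ι}
    (h : IsUFIMOn g s) (hA : A ⊆ s) (hA0 : ∑ i ∈ A, g i = 0) {x y : G}
    (hx : x ∈ subsetSums g A) (hy : y ∈ subsetSums g (s \ A)) (hxy : x + y = 0) : x = 0 := by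
  obtain ⟨B, hB, rfl⟩ := hx
  obtain ⟨C, hC, rfl⟩ := hy
  have hCA : Disjoint C A := disjoint_sdiff_self_left.mono_left hC
  rw [← sum_union (hCA.symm.mono_left hB)] at hxy
  have hinter := h.sum_inter_eq_zero _ (union_subset (hB.trans hA) (hC.trans sdiff_subset)) A hA
    hxy hA0
  rwa [union_inter_distrib_right, inter_eq_left.2 hB, disjoint_iff_inter_eq_empty.1 hCA,
    union_empty] at hinter

theorem IsUFIMOn.two_le_card [DecidableEq ι] {g : ι → G} {s : Finset ι} (h : IsUFIMOn g s)
    (hs : s.Nonempty) : 2 ≤ #s := by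
  by_contra! hlt
  have hcard : #s = 1 := le_antisymm (Nat.le_of_lt_succ hlt) hs.card_pos
  obtain ⟨i, rfl⟩ := card_eq_one.1 hcard
  exact h.ne_zero i (mem_singleton_self i) (by simpa using h.sum_eq_zero)

theorem IsUFIMOn.exists_card_le_sub_mem_subsetSums [DecidableEq ι] {g : ι → G} {s : Finset ι}
    (h : IsUFIMOn g s) :
    ∃ X : Finset G, #s ≤ #X ∧ ∀ x ∈ X, ∀ y ∈ X, x - y ∈ subsetSums g s := by
  classical
  induction s using Finset.strongInduction with
  | H s ih =>
    by_cases! hmin : ∀ A ⊆ s, ∑ i ∈ A, g i = 0 → A = ∅ ∨ A = s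
    · obtain ⟨X, hX, hsub⟩ := exists_card_eq_sub_mem_subsetSums h.sum_eq_zero hmin
      exact ⟨X, hX.ge, hsub⟩
    obtain ⟨A, hA, hA0, hne, hAs⟩ := hmin
    have hlt : A ⊂ s := hA.ssubset_of_ne hAs
    -- The pointwise sum `X + Y` is direct, so its size is `#X * #Y ≥ #X + #Y`.
    obtain ⟨X, hX, hXsub⟩ := ih A hlt (h.of_subset hA hA0)
    obtain ⟨Y, hY, hYsub⟩ := ih (s \ A) (sdiff_ssubset hA hne) (h.sdiff hA hA0)
    have hinj : Set.InjOn (fun z : G × G ↦ z.1 + z.2) (X ×ˢ Y : Finset (G × G)) := by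
      rintro ⟨x, y⟩ hxy ⟨x', y'⟩ hxy' heq
      obtain ⟨hx, hy⟩ := mem_product.1 hxy
      obtain ⟨hx', hy'⟩ := mem_product.1 hxy'
      have hsum : (x - x') + (y - y') = 0 := by rw [sub_add_sub_comm, sub_eq_zero]; exact heq
      have hx0 : x - x' = 0 :=
        h.eq_zero_of_add_eq_zero hA hA0 (hXsub x hx x' hx') (hYsub y hy y' hy') hsum
      rw [hx0, zero_add] at hsum
      exact Prod.ext (sub_eq_zero.1 hx0) (sub_eq_zero.1 hsum)
    refine ⟨(X ×ˢ Y).image fun z ↦ z.1 + z.2, ?_, ?_⟩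
    · have hA2 : 2 ≤ #X := ((h.of_subset hA hA0).two_le_card hne).trans hX
      have hB2 : 2 ≤ #Y := ((h.sdiff hA hA0).two_le_card (sdiff_nonempty.2 hlt.not_subset)).trans hY
      calc #s = #(s \ A) + #A := (card_sdiff_add_card_eq_card hA).symm
        _ ≤ #X + #Y := by omega
        _ ≤ #X * #Y := Nat.add_le_mul hA2 hB2
        _ = _ := by rw [card_image_of_injOn hinj, card_product]
    · simp only [forall_mem_image, mem_product, Prod.forall]
      rintro x y ⟨hx, hy⟩ x' y' ⟨hx', hy'⟩
      rw [← sub_add_sub_comm]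
      exact add_mem_subsetSums_of_sdiff hA (hXsub x hx x' hx') (hYsub y hy y' hy')

theorem IsUFIMOn.card_le [Finite G] [DecidableEq ι] {g : ι → G} {s : Finset ι}
    (h : IsUFIMOn g s) : #s ≤ Nat.card G := by
  have := Fintype.ofFinite G
  obtain ⟨X, hX, -⟩ := h.exists_card_le_sub_mem_subsetSums
  exact hX.trans (X.card_le_univ.trans_eq Nat.card_eq_fintype_card.symm)

/-! ### Basic properties of `K1` -/

theorem crossNumOn_le_card_div {g : ι → G} {s : Finset ι} {c : ℝ} (hc : 0 < c)
    (hg : ∀ i ∈ s, c ≤ addOrderOf (g i)) : crossNumOn g s ≤ #s / c :=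
  calc crossNumOn g s ≤ #s • (1 / c) :=
        sum_le_card_nsmul s _ _ fun i hi ↦ one_div_le_one_div_of_le hc (hg i hi)
    _ = #s / c := by rw [nsmul_eq_mul, mul_one_div]

theorem bddAbove_crossNum [Finite G] :
    BddAbove {x : ℝ | ∃ (ℓ : ℕ) (g : Fin ℓ → G), IsUFIM g ∧ crossNum g = x} := by
  refine ⟨Nat.card G, ?_⟩
  rintro _ ⟨ℓ, g, hg, rfl⟩
  calc crossNum g ≤ #(univ : Finset (Fin ℓ)) / 1 :=
        crossNumOn_le_card_div one_pos fun i _ ↦ Nat.one_le_cast.2 (addOrderOf_pos (g i))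
    _ ≤ Nat.card G := by rw [div_one]; exact_mod_cast hg.isUFIMOn_univ.card_le

theorem IsUFIMOn.crossNumOn_le_K1 [Finite G] [DecidableEq ι] {g : ι → G} {s : Finset ι}
    (h : IsUFIMOn g s) : crossNumOn g s ≤ K1 G := by
  obtain ⟨g', hg', heq⟩ := h.exists_isUFIM_crossNum_eq
  exact le_csSup bddAbove_crossNum ⟨_, g', hg', heq⟩

theorem K1_le {c : ℝ} (hc : ∀ (ℓ : ℕ) (g : Fin ℓ → G), IsUFIM g → crossNum g ≤ c) :
    K1 G ≤ c := by
  have hempty : IsUFIMOn (Fin.elim0 : Fin 0 → G) univ := .of_forall_eq_empty_or_eq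
    (fun i ↦ i.elim0) (by simp) fun A _ _ ↦ .inl A.eq_empty_of_isEmpty
  refine csSup_le ⟨_, 0, _, hempty.isUFIM, rfl⟩ ?_
  rintro _ ⟨ℓ, g, hg, rfl⟩
  exact hc ℓ g hg

theorem K1_nonneg : 0 ≤ K1 G := by
  refine Real.sSup_nonneg ?_
  rintro _ ⟨ℓ, g, -, rfl⟩
  exact sum_nonneg fun i _ ↦ by positivity

theorem K1_le_of_injective [Finite G] {ψ : H →+ G} (hψ : Function.Injective ψ) :
    K1 H ≤ K1 G := by
  refine K1_le fun ℓ h hh ↦ ?_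
  have hUF : IsUFIMOn (ψ ∘ h) univ :=
    (isUFIMOn_iff_of_injective hψ fun _ _ ↦ rfl).1 hh.isUFIMOn_univ
  calc crossNum h = crossNumOn (ψ ∘ h) univ := crossNumOn_eq_of_injective hψ fun _ _ ↦ rfl
    _ ≤ K1 G := hUF.crossNumOn_le_K1

/-! ### The cross number of an extension -/

theorem crossNumOn_add_sdiff [DecidableEq ι] {A s : Finset ι} (hA : A ⊆ s) (g : ι → G) :
    crossNumOn g A + crossNumOn g (s \ A) = crossNumOn g s := by
  rw [add_comm]
  exact sum_sdiff hA

theorem one_div_exponent_le_one_div_addOrderOf [Finite G] (x : G) :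
    (1 : ℝ) / AddMonoid.exponent G ≤ 1 / addOrderOf x :=
  one_div_le_one_div_of_le (Nat.cast_pos.2 (addOrderOf_pos x)) <| Nat.cast_le.2 <|
    Nat.le_of_dvd (AddMonoid.exponent_pos.2 .of_finite) (AddMonoid.addOrder_dvd_exponent x)

section Extension

variable {C : Type*} [AddCommGroup C] {ψ : H →+ G} {φ : G →+ C}

theorem crossNumOn_le_one_div_exponent [Finite H] [Finite C]
    (hord : ∀ x, φ x ≠ 0 → Nat.card C * AddMonoid.exponent H ≤ addOrderOf x)
    {g : ι → G} {B : Finset ι} (hB : ∀ i ∈ B, φ (g i) ≠ 0) (hcard : #B ≤ Nat.card C) :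
    crossNumOn g B ≤ 1 / AddMonoid.exponent H := by
  have hC : (0 : ℝ) < Nat.card C := Nat.cast_pos.2 Nat.card_pos
  have hH : (0 : ℝ) < AddMonoid.exponent H := Nat.cast_pos.2 (AddMonoid.exponent_pos.2 .of_finite)
  calc crossNumOn g B ≤ #B / (Nat.card C * AddMonoid.exponent H) :=
        crossNumOn_le_card_div (by positivity) fun i hi ↦ by exact_mod_cast hord _ (hB i hi)
    _ ≤ Nat.card C / (Nat.card C * AddMonoid.exponent H) := by gcongr
    _ = 1 / AddMonoid.exponent H := div_mul_cancel_left₀ hC.ne' _ |>.trans (one_div _).symm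

theorem exists_minimal_map_sum_eq_zero (φ : G →+ C) {g : ι → G} {A : Finset ι}
    (hA : ∃ I ⊆ A, ∑ i ∈ I, φ (g i) = 0 ∧ ∑ i ∈ I, g i ≠ 0) :
    ∃ I ⊆ A, ∑ i ∈ I, φ (g i) = 0 ∧ ∑ i ∈ I, g i ≠ 0 ∧
      ∀ J ⊆ I, ∑ i ∈ J, φ (g i) = 0 → J = ∅ ∨ J = I := by
  classical
  obtain ⟨I, hI⟩ := Set.Finite.exists_minimal
    (s := {I | I ⊆ A ∧ ∑ i ∈ I, φ (g i) = 0 ∧ ∑ i ∈ I, g i ≠ 0})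
    (A.powerset.finite_toSet.subset fun I hI ↦ mem_coe.2 (mem_powerset.2 hI.1)) hA
  obtain ⟨hIA, hφI, hI0⟩ := hI.prop
  refine ⟨I, hIA, hφI, hI0, fun J hJ hφJ ↦ ?_⟩
  by_cases hJ0 : ∑ i ∈ J, g i = 0
  · have hφIJ : ∑ i ∈ I \ J, φ (g i) = 0 := sum_sdiff_eq_zero hJ hφI hφJ
    have hIJ0 : ∑ i ∈ I \ J, g i ≠ 0 := by rwa [sum_sdiff_eq_sub hJ, hJ0, sub_zero]
    have hIJ : I ≤ I \ J := hI.le_of_le ⟨sdiff_subset.trans hIA, hφIJ, hIJ0⟩ sdiff_subset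
    exact .inl (disjoint_self.1 ((subset_sdiff.1 hIJ).2.mono_left hJ))
  · exact .inr (hJ.antisymm (hI.le_of_le ⟨hJ.trans hIA, hφJ, hJ0⟩ hJ))

theorem IsUFIMOn.crossNumOn_le_add_of_forall_sum_eq_zero [Finite H] [Finite C] [DecidableEq ι]
    (hψ : Function.Injective ψ) (hex : Function.Exact ψ φ)
    (hord : ∀ x, φ x ≠ 0 → Nat.card C * AddMonoid.exponent H ≤ addOrderOf x)
    {g : ι → G} {A s : Finset ι} (h : IsUFIMOn g s) (hAs : A ⊆ s) (hA : ∀ i ∈ A, φ (g i) ≠ 0)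
    (hsA : ∀ i ∈ s \ A, φ (g i) = 0)
    (hsum : ∀ I ⊆ A, ∑ i ∈ I, φ (g i) = 0 → ∑ i ∈ I, g i = 0) :
    crossNumOn g s ≤ K1 H + 1 / AddMonoid.exponent H := by
  have hφA : ∑ i ∈ A, φ (g i) = 0 := by
    have hφs : ∑ i ∈ s, φ (g i) = 0 := by rw [← map_sum, h.sum_eq_zero, map_zero]
    rwa [← sum_sdiff hAs, Finset.sum_eq_zero hsA, zero_add] at hφs
  have hφUF : IsUFIMOn (fun i ↦ φ (g i)) A := by
    refine ⟨hA, hφA, fun I hI J hJ hI0 hJ0 ↦ ?_⟩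
    have hIJ := h.sum_inter_eq_zero I (hI.trans hAs) J (hJ.trans hAs) (hsum I hI hI0)
      (hsum J hJ hJ0)
    rw [← map_sum, hIJ, map_zero]
  choose! f hf using fun i (hi : i ∈ s \ A) ↦ (hex (g i)).1 (hsA i hi)
  have hfUF : IsUFIMOn f (s \ A) :=
    (isUFIMOn_iff_of_injective hψ hf).2 (h.sdiff hAs (hsum A Subset.rfl hφA))
  calc crossNumOn g s = crossNumOn g A + crossNumOn f (s \ A) := by
        rw [crossNumOn_eq_of_injective hψ hf, crossNumOn_add_sdiff hAs]
    _ ≤ 1 / AddMonoid.exponent H + K1 H :=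
        add_le_add (crossNumOn_le_one_div_exponent hord hA hφUF.card_le) hfUF.crossNumOn_le_K1
    _ = K1 H + 1 / AddMonoid.exponent H := add_comm _ _

theorem IsUFIMOn.exists_merge [DecidableEq ι] {g : ι → G} {I s : Finset ι} (h : IsUFIMOn g s)
    (hI : I ⊆ s) (hI0 : ∑ i ∈ I, g i ≠ 0) :
    ∃ g' : Fin (#(s \ I) + 1) → G, IsUFIM g' ∧
      crossNum g' = 1 / addOrderOf (∑ i ∈ I, g i) + crossNumOn g (s \ I) := by
  let T (o : Option ι) : Finset ι := o.elim I singleton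
  have hT : (insertNone (s \ I) : Set (Option ι)).PairwiseDisjoint T := by
    rintro (_ | i) hi (_ | k) hk hik
    · exact absurd rfl hik
    · exact disjoint_singleton_right.2 (mem_sdiff.1 (some_mem_insertNone.1 hk)).2
    · exact disjoint_singleton_left.2 (mem_sdiff.1 (some_mem_insertNone.1 hi)).2
    · exact disjoint_singleton.2 fun hik' ↦ hik (congrArg some hik')
  have hs : (insertNone (s \ I)).biUnion T = s := by
    ext i
    simp only [mem_biUnion, Option.exists, none_mem_insertNone, true_and, some_mem_insertNone,
      Option.elim, mem_singleton, exists_eq_right', T, ← mem_union, union_sdiff_of_subset hI]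
  have hUF : IsUFIMOn (fun o ↦ ∑ i ∈ T o, g i) (insertNone (s \ I)) := by
    refine (hs.symm ▸ h : IsUFIMOn g _).coarsen hT ?_
    rintro (_ | i) hi
    · exact hI0
    · rw [show T (some i) = {i} from rfl, sum_singleton]
      exact h.ne_zero i (mem_sdiff.1 (some_mem_insertNone.1 hi)).1
  have hg := hUF.exists_isUFIM_crossNum_eq
  rw [card_insertNone, crossNumOn, sum_insertNone] at hg
  simpa only [T, Option.elim, crossNumOn, sum_singleton] using hg

theorem K1_le_add_one_div_exponent [Finite G] [Finite C]
    (hψ : Function.Injective ψ) (hex : Function.Exact ψ φ)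
    (hord : ∀ x, φ x ≠ 0 → Nat.card C * AddMonoid.exponent H ≤ addOrderOf x) :
    K1 G ≤ K1 H + 1 / AddMonoid.exponent H := by
  have : Finite H := .of_injective ψ hψ
  refine K1_le fun ℓ ↦ ?_
  induction ℓ using Nat.strong_induction_on with
  | h ℓ ih =>
    intro g hg
    classical
    have hUF : IsUFIMOn g univ := hg.isUFIMOn_univ
    let A : Finset (Fin ℓ) := {i | φ (g i) ≠ 0}
    have hA : ∀ i ∈ A, φ (g i) ≠ 0 := fun i hi ↦ (mem_filter.1 hi).2
    by_cases! hsum : ∀ I ⊆ A, ∑ i ∈ I, φ (g i) = 0 → ∑ i ∈ I, g i = 0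
    · refine hUF.crossNumOn_le_add_of_forall_sum_eq_zero hψ hex hord (subset_univ A) hA ?_ hsum
      exact fun i hi ↦ not_not.1 fun hφ ↦ (mem_sdiff.1 hi).2 (mem_filter.2 ⟨mem_univ i, hφ⟩)
    obtain ⟨I, hIA, hφI, hI0, hmin⟩ := exists_minimal_map_sum_eq_zero φ hsum
    have hφUF : IsUFIMOn (fun i ↦ φ (g i)) I :=
      .of_forall_eq_empty_or_eq (fun i hi ↦ hA i (hIA hi)) hφI hmin
    obtain ⟨g', hg', heq⟩ := hUF.exists_merge (subset_univ I) hI0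
    have hlt : #(univ \ I) + 1 < ℓ := by
      have hI2 : 2 ≤ #I := hφUF.two_le_card (nonempty_of_sum_ne_zero hI0)
      have hcard := card_sdiff_add_card_eq_card (subset_univ I)
      rw [card_fin] at hcard
      omega
    obtain ⟨x, hx⟩ := (hex (∑ i ∈ I, g i)).1 (by rw [map_sum, hφI])
    calc crossNum g = crossNumOn g I + crossNumOn g (univ \ I) :=
          (crossNumOn_add_sdiff (subset_univ I) g).symm
      _ ≤ 1 / AddMonoid.exponent H + crossNumOn g (univ \ I) := by
          gcongr
          exact crossNumOn_le_one_div_exponent hord (fun i hi ↦ hA i (hIA hi)) hφUF.card_le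
      _ ≤ 1 / addOrderOf x + crossNumOn g (univ \ I) := by
          gcongr ?_ + _
          exact one_div_exponent_le_one_div_addOrderOf x
      _ = crossNum g' := by rw [heq, ← hx, addOrderOf_injective ψ hψ]
      _ ≤ K1 H + 1 / AddMonoid.exponent H := ih _ hlt g' hg'

theorem exists_isUFIMOn_sum_eq_zero_of_map_sum_eq_zero {n : ℕ} (hn : 1 < n) {φ : G →+ ZMod n}
    (hφ : Function.Surjective φ) :
    ∃ h : Fin n → G, IsUFIMOn h univ ∧ ∀ A, φ (∑ i ∈ A, h i) = 0 → ∑ i ∈ A, h i = 0 := by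
  have : NeZero n := ⟨by omega⟩
  have : Fact (1 < n) := ⟨hn⟩
  obtain ⟨x, hx⟩ := hφ 1
  let h (i : Fin n) : G := x - Pi.single (M := fun _ ↦ G) 0 (n • x) i
  have hφh (i : Fin n) : φ (h i) = 1 := by
    obtain rfl | hi := eq_or_ne i 0
    · rw [map_sub, Pi.single_eq_same, map_nsmul, hx, nsmul_one, ZMod.natCast_self, sub_zero]
    · rw [map_sub, Pi.single_eq_of_ne hi, hx, map_zero, sub_zero]
  have hsum : ∑ i, h i = 0 := by
    rw [sum_sub_distrib, sum_const, card_fin, sum_pi_single', if_pos (mem_univ _), sub_self]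
  have hmin (A : Finset (Fin n)) (hA : φ (∑ i ∈ A, h i) = 0) : A = ∅ ∨ A = univ := by
    have hdvd : n ∣ #A := by
      rwa [map_sum, sum_congr rfl fun i _ ↦ hφh i, sum_const, nsmul_one,
        ZMod.natCast_eq_zero_iff] at hA
    obtain hA0 | hA0 := A.eq_empty_or_nonempty
    · exact .inl hA0
    · refine .inr (eq_univ_of_card A ?_)
      rw [Fintype.card_fin]
      exact (card_finset_fin_le A).antisymm (Nat.le_of_dvd hA0.card_pos hdvd)
  refine ⟨h, .of_forall_eq_empty_or_eq (fun i _ hi ↦ ?_) hsum fun A _ hA ↦ hmin A ?_,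
    fun A hA ↦ ?_⟩
  · exact one_ne_zero ((hφh i).symm.trans (by rw [hi, map_zero]))
  · rw [hA, map_zero]
  · obtain rfl | rfl := hmin A hA
    · exact sum_empty
    · exact hsum

theorem K1_add_div_exponent_le [Finite G] {n : ℕ} (hn : 1 < n) {φ : G →+ ZMod n}
    (hψ : Function.Injective ψ) (hφ : Function.Surjective φ) (hφψ : ∀ x, φ (ψ x) = 0) :
    K1 H + n / AddMonoid.exponent G ≤ K1 G := by
  obtain ⟨h, hUF, hφh⟩ := exists_isUFIMOn_sum_eq_zero_of_map_sum_eq_zero hn hφ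
  rw [← le_sub_iff_add_le]
  refine K1_le fun ℓ g hg ↦ ?_
  rw [le_sub_iff_add_le]
  have hψg : IsUFIMOn (ψ ∘ g) univ :=
    (isUFIMOn_iff_of_injective hψ fun _ _ ↦ rfl).1 hg.isUFIMOn_univ
  have hunion : IsUFIMOn (Sum.elim (ψ ∘ g) h) (univ.disjSum univ) := by
    refine hψg.disjSum hUF ?_
    rintro _ ⟨A, -, rfl⟩ _ ⟨B, -, rfl⟩ hAB
    have hφA : φ (∑ i ∈ A, (ψ ∘ g) i) = 0 := by simp only [Function.comp, ← map_sum, hφψ]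
    have hB : ∑ i ∈ B, h i = 0 :=
      hφh B (by simpa only [map_add, hφA, zero_add, map_zero] using congrArg φ hAB)
    rwa [hB, add_zero] at hAB
  have hcross : n / AddMonoid.exponent G ≤ crossNumOn h univ :=
    calc (n : ℝ) / AddMonoid.exponent G = ∑ _i : Fin n, (1 : ℝ) / AddMonoid.exponent G := by
          rw [sum_const, card_fin, nsmul_eq_mul, mul_one_div]
      _ ≤ crossNumOn h univ := sum_le_sum fun i _ ↦ one_div_exponent_le_one_div_addOrderOf (h i)
  calc crossNum g + n / AddMonoid.exponent G
      ≤ crossNumOn (ψ ∘ g) univ + crossNumOn h univ :=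
        add_le_add (crossNumOn_eq_of_injective hψ fun _ _ ↦ rfl).le hcross
    _ = crossNumOn (Sum.elim (ψ ∘ g) h) (univ.disjSum univ) := by
        simp only [crossNumOn, sum_disjSum, Sum.elim_inl, Sum.elim_inr]
    _ ≤ K1 G := hunion.crossNumOn_le_K1

end Extension

end UniqueFactorization

/-! ### The groups `ZMod (p ^ m) × F` -/

section PrimePower

/-- The embedding of the cyclic group of order `a` into that of order `b * a` given by
multiplication by `b`, whose image is the kernel of the reduction modulo `b`. -/
def zmodMulHom (a b : ℕ) : ZMod a →+ ZMod (b * a) :=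
  ZMod.lift a ⟨(AddMonoidHom.mulLeft (b : ZMod (b * a))).comp (Int.castAddHom _), by
    simp only [AddMonoidHom.comp_apply, Int.coe_castAddHom, AddMonoidHom.coe_mulLeft,
      Int.cast_natCast]
    rw [← Nat.cast_mul, ZMod.natCast_self]⟩

theorem zmodMulHom_intCast (a b : ℕ) (x : ℤ) : zmodMulHom a b x = ((b * x : ℤ) : ZMod (b * a)) := by
  rw [zmodMulHom, ZMod.lift_coe, Int.cast_mul, Int.cast_natCast]
  rfl

theorem zmodMulHom_injective (a : ℕ) {b : ℕ} (hb : b ≠ 0) :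
    Function.Injective (zmodMulHom a b) := by
  refine (injective_iff_map_eq_zero _).2 fun x hx ↦ ?_
  obtain ⟨x, rfl⟩ := ZMod.intCast_surjective x
  rw [zmodMulHom_intCast, ZMod.intCast_zmod_eq_zero_iff_dvd, Nat.cast_mul] at hx
  exact (ZMod.intCast_zmod_eq_zero_iff_dvd _ _).2
    (Int.dvd_of_mul_dvd_mul_left (Int.natCast_ne_zero.2 hb) hx)

theorem zmodMulHom_exact (a b : ℕ) :
    Function.Exact (zmodMulHom a b) (ZMod.castHom (dvd_mul_right b a) (ZMod b)) := by
  intro y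
  obtain ⟨y, rfl⟩ := ZMod.intCast_surjective y
  rw [map_intCast, ZMod.intCast_zmod_eq_zero_iff_dvd]
  constructor
  · rintro ⟨x, rfl⟩
    exact ⟨x, zmodMulHom_intCast a b x⟩
  · rintro ⟨x, hx⟩
    obtain ⟨x, rfl⟩ := ZMod.intCast_surjective x
    rw [zmodMulHom_intCast, ← sub_eq_zero, ← Int.cast_sub, ZMod.intCast_zmod_eq_zero_iff_dvd,
      Nat.cast_mul] at hx
    exact (dvd_sub_right (dvd_mul_right _ x)).1 ((dvd_mul_right _ _).trans hx)

theorem addOrderOf_eq_of_castHom_ne_zero {p k : ℕ} (hp : p.Prime) {x : ZMod (p * p ^ k)}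
    (hx : ZMod.castHom (dvd_mul_right p (p ^ k)) (ZMod p) x ≠ 0) : addOrderOf x = p * p ^ k := by
  have : NeZero p := ⟨hp.ne_zero⟩
  obtain ⟨x, rfl⟩ := ZMod.natCast_zmod_surjective x
  rw [map_natCast, Ne, ZMod.natCast_eq_zero_iff, ← hp.coprime_iff_not_dvd] at hx
  rw [ZMod.addOrderOf_coe x (NeZero.ne _), (hx.mul_left (hx.pow_left k)).gcd_eq_one, Nat.div_one]

variable {F : Type*} [AddCommGroup F] [Finite F] {p : ℕ}

theorem K1_zmod_pow_succ_prod_le (hp : p.Prime) {k : ℕ} (hF : AddMonoid.exponent F ∣ p ^ k) :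
    K1 (ZMod (p ^ (k + 1)) × F) ≤ K1 (ZMod (p ^ k) × F) + 1 / p ^ k := by
  have : NeZero p := ⟨hp.ne_zero⟩
  rw [pow_succ']
  let π := ZMod.castHom (dvd_mul_right p (p ^ k)) (ZMod p)
  let ψ := (zmodMulHom (p ^ k) p).prodMap (AddMonoidHom.id F)
  let φ := (π : ZMod (p * p ^ k) →+ ZMod p).comp (AddMonoidHom.fst _ F)
  have hψ : Function.Injective ψ :=
    (zmodMulHom_injective (p ^ k) hp.ne_zero).prodMap Function.injective_id
  have hex : Function.Exact ψ φ := by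
    rintro ⟨x, f⟩
    refine (zmodMulHom_exact (p ^ k) p x).trans ⟨?_, ?_⟩
    · rintro ⟨y, rfl⟩
      exact ⟨(y, f), rfl⟩
    · rintro ⟨⟨y, _⟩, hy⟩
      exact ⟨y, congrArg Prod.fst hy⟩
  have hexp : AddMonoid.exponent (ZMod (p ^ k) × F) = p ^ k := by
    rw [AddMonoid.exponent_prod, ZMod.exponent, lcm_eq_nat_lcm, Nat.lcm_eq_left hF]
  have hord : ∀ x, φ x ≠ 0 →
      Nat.card (ZMod p) * AddMonoid.exponent (ZMod (p ^ k) × F) ≤ addOrderOf x := by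
    intro x hx
    have hx1 : addOrderOf x.1 = p * p ^ k := addOrderOf_eq_of_castHom_ne_zero hp hx
    calc Nat.card (ZMod p) * AddMonoid.exponent (ZMod (p ^ k) × F) = addOrderOf x.1 := by
          rw [hexp, Nat.card_zmod, hx1]
      _ ≤ addOrderOf x :=
          Nat.le_of_dvd (addOrderOf_pos x) (addOrderOf_map_dvd (AddMonoidHom.fst _ F) x)
  simpa only [hexp, Nat.cast_pow] using K1_le_add_one_div_exponent hψ hex hord

theorem K1_zmod_pow_add_one_div_le (hp : p.Prime) (k : ℕ) :
    K1 (ZMod (p ^ k)) + 1 / p ^ k ≤ K1 (ZMod (p ^ (k + 1))) := by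
  have : NeZero p := ⟨hp.ne_zero⟩
  rw [pow_succ']
  let π := ZMod.castHom (dvd_mul_right p (p ^ k)) (ZMod p)
  have h := K1_add_div_exponent_le hp.one_lt (zmodMulHom_injective (p ^ k) hp.ne_zero)
    (φ := (π : ZMod (p * p ^ k) →+ ZMod p)) (ZMod.castHom_surjective (dvd_mul_right p (p ^ k)))
    (zmodMulHom_exact (p ^ k) p).apply_apply_eq_zero
  rwa [ZMod.exponent, Nat.cast_mul, Nat.cast_pow,
    div_mul_cancel_left₀ (Nat.cast_ne_zero.2 hp.ne_zero), ← one_div] at h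

theorem one_le_K1_zmod (hp : p.Prime) : 1 ≤ K1 (ZMod p) := by
  have h := K1_zmod_pow_add_one_div_le hp 0
  rw [zero_add, pow_one, pow_zero, pow_zero, div_one] at h
  exact (le_add_of_nonneg_left K1_nonneg).trans h

theorem K1_zmod_prod_pi_le (n : ℕ) [NeZero p] :
    K1 (ZMod p × (Fin n → ZMod p)) ≤ K1 (Fin (n + 1) → ZMod p) :=
  K1_le_of_injective (ψ := (Fin.consLinearEquiv ℤ fun _ : Fin (n + 1) ↦ ZMod p : _ →+ _))
    (Fin.consLinearEquiv ℤ fun _ : Fin (n + 1) ↦ ZMod p).injective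

theorem K1_pm_pn_le_general (hp : p.Prime) {k m : ℕ} (hkm : k ≤ m)
    (hF : AddMonoid.exponent F ∣ p ^ k) :
    K1 (ZMod (p ^ m) × F) ≤ K1 (ZMod (p ^ m)) + K1 (ZMod (p ^ k) × F) - K1 (ZMod (p ^ k)) := by
  induction m, hkm using Nat.le_induction with
  | base => rw [add_sub_cancel_left]
  | succ m hkm ih =>
    have hupper := K1_zmod_pow_succ_prod_le hp (hF.trans (pow_dvd_pow p hkm))
    have hlower := K1_zmod_pow_add_one_div_le hp m
    linarith

end PrimePower

/-- Theorem (mainthm (1)): `K₁(C_{p^m} ⊕ C_p^n) ≤ K₁(C_{p^m}) + K₁(C_p^{n+1}) − 1`. -/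
theorem K1_pm_pn_le (p : ℕ) (hp : p.Prime) (m n : ℕ) (hm : 1 ≤ m) (hn : 1 ≤ n) :
    K1 (ZMod (p ^ m) × (Fin n → ZMod p)) ≤
      K1 (ZMod (p ^ m)) + K1 (Fin (n + 1) → ZMod p) - 1 := by
  have : NeZero p := ⟨hp.ne_zero⟩
  have hexp : AddMonoid.exponent (Fin n → ZMod p) ∣ p ^ 1 := by
    simp [AddMonoid.exponent_pi, ZMod.exponent]
  have h := K1_pm_pn_le_general hp hm hexp
  rw [pow_one] at h
  linarith [one_le_K1_zmod hp, K1_zmod_prod_pi_le (p := p) n]
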